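/- Let (X,d) be a metric space and ν a Borel probability measure on X satisfying the Gaussian enlargement property with parameter τ > 0. Let F : X → ℝ be L-Lipschitz with L > 0, and for a ∈ (0,1) let q_a(F) = inf{r : ν({F ≤ r}) ≥ a}. Then for every 0 < a < b < 1, q_b(F) - q_a(F) ≤ L·√(2τ)·(Φ⁻¹(b) - Φ⁻¹(a)). Moreover, if m is a median of F (i.e. ν({F ≤ m}) ≥ 1/2 and ν({F ≥ m}) ≥ 1/2), then for every r > 0, ν({F ≥ m+r}) ≤ 1 - Φ(r/(L√(2τ))) and ν({F ≤ m-r}) ≤ 1 - Φ(r/(L√(2τ))). -/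

import Mathlib

open Real MeasureTheory

/-- The standard Gaussian density. -/
noncomputable def gaussPdf (z : ℝ) : ℝ := (Real.sqrt (2 * Real.pi))⁻¹ * Real.exp (-z ^ 2 / 2)

/-- The standard normal CDF. -/
noncomputable def Phi (r : ℝ) : ℝ := ∫ z in Set.Iic r, gaussPdf z

/-- The inverse of the standard normal CDF. -/
noncomputable def PhiInv : ℝ → ℝ := Function.invFun Phi

/-- The open `r`-enlargement `E_r = {y : d(y,E) < r}` of a set (with `E_0 = E`). -/
noncomputable def enlarge {X : Type*} [MetricSpace X] (E : Set X) (r : ℝ) : Set X :=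
  if r = 0 then E else Metric.thickening r E

/-- A Borel probability measure `ν` on a metric space satisfies the Gaussian enlargement
property with parameter `τ > 0` if for every Borel set `E` with `0 < ν(E) < 1` and every
`r ≥ 0`, `ν(E_r) ≥ Φ(Φ⁻¹(ν(E)) + r/√(2τ))`. -/
def GaussianEnlargement {X : Type*} [MetricSpace X] [MeasurableSpace X]
    (ν : Measure X) (τ : ℝ) : Prop :=
  ∀ E : Set X, MeasurableSet E → 0 < ν E → ν E < 1 → ∀ r : ℝ, 0 ≤ r →
    ENNReal.ofReal (Phi (PhiInv (ν E).toReal + r / Real.sqrt (2 * τ))) ≤ ν (enlarge E r)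

/-- The distance `d(A,B) = inf {d(a,b) : a ∈ A, b ∈ B}` between two sets. -/
noncomputable def setDist {X : Type*} [MetricSpace X] (A B : Set X) : ℝ :=
  sInf (Set.image2 dist A B)

/-- The `a`-quantile `q_a(F) = inf {r : ν(F ≤ r) ≥ a}` of an observable `F`. -/
noncomputable def quantile {X : Type*} [MeasurableSpace X] (ν : Measure X)
    (F : X → ℝ) (a : ℝ) : ℝ :=
  sInf {r : ℝ | ENNReal.ofReal a ≤ ν {x | F x ≤ r}}

/-!
Enlarging a sublevel set `{F ≤ c}` of an `L`-Lipschitz function by `r / L` stays inside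
`{F < c + r}`. The enlargement property therefore says that raising the level by `r` moves the
mass of the sublevel set, read on the Gaussian scale `Φ⁻¹`, up by at least `r / (L √(2τ))`.
Starting from a level `c` of mass at least `a` and taking `r = L √(2τ) (Φ⁻¹ b - Φ⁻¹ a)`, one
reaches mass `b`; the quantile estimate is the infimum over such `c`. Starting from a median, where
`Φ⁻¹ (1 / 2) = 0`, one gets the upper tail bound, and the lower one is the upper one for `-F`.
-/

open ProbabilityTheory Set
open scoped NNReal

section Cdf

variable (μ : Measure ℝ) [IsProbabilityMeasure μ]

theorem continuous_cdf [NullSingletonClass μ] : Continuous (cdf μ) := by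
  refine continuous_iff_continuousAt.2 fun x => ?_
  rw [(monotone_cdf μ).continuousAt_iff_leftLim_eq_rightLim, StieltjesFunction.rightLim_eq]
  refine ((monotone_cdf μ).leftLim_le le_rfl).antisymm (sub_nonpos.1 ?_)
  rw [← ENNReal.ofReal_eq_zero, ← StieltjesFunction.measure_singleton, measure_cdf,
    measure_singleton]

theorem strictMono_cdf [μ.IsOpenPosMeasure] : StrictMono (cdf μ) := by
  intro x y hxy
  rw [← sub_pos, ← ENNReal.ofReal_pos, ← StieltjesFunction.measure_Ioc, measure_cdf]
  exact (isOpen_Ioo.measure_pos μ (nonempty_Ioo.2 hxy)).trans_le (measure_mono Ioo_subset_Ioc_self)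

theorem exists_cdf_eq [NullSingletonClass μ] {a : ℝ} (h0 : 0 < a) (h1 : a < 1) :
    ∃ x, cdf μ x = a := by
  obtain ⟨x, hx⟩ := ((tendsto_cdf_atBot μ).eventually_le_const h0).exists
  obtain ⟨y, hy⟩ := ((tendsto_cdf_atTop μ).eventually_const_le h1).exists
  exact mem_range_of_exists_le_of_exists_ge (continuous_cdf μ) ⟨x, hx⟩ ⟨y, hy⟩

theorem cdf_neg [NullSingletonClass μ] [μ.IsNegInvariant] (x : ℝ) :
    cdf μ (-x) = 1 - cdf μ x := by
  have reflect : μ (Iic (-x)) = μ (Ioi x) := by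
    rw [← Measure.measure_neg, neg_Iic, neg_neg, measure_congr Ioi_ae_eq_Ici]
  rw [cdf_eq_real, cdf_eq_real, ← probReal_compl_eq_one_sub measurableSet_Iic, compl_Iic,
    Measure.real, reflect, Measure.real]

end Cdf

section StandardNormal

theorem gaussPdf_eq_gaussianPDFReal : gaussPdf = gaussianPDFReal 0 1 := by
  funext z
  simp [gaussPdf, gaussianPDFReal]

theorem Phi_eq_cdf (r : ℝ) : Phi r = cdf (gaussianReal 0 1) r := by
  rw [Phi, gaussPdf_eq_gaussianPDFReal, cdf_eq_real, Measure.real,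
    gaussianReal_apply_eq_integral 0 one_ne_zero,
    ENNReal.toReal_ofReal (integral_nonneg (gaussianPDFReal_nonneg 0 1))]

theorem Phi_le_one (r : ℝ) : Phi r ≤ 1 :=
  (Phi_eq_cdf r).trans_le (cdf_le_one _ r)

theorem strictMono_Phi : StrictMono Phi := by
  have := (gaussianReal_absolutelyContinuous' 0 one_ne_zero).isOpenPosMeasure
  simpa only [← funext Phi_eq_cdf] using strictMono_cdf (gaussianReal 0 1)

theorem Phi_zero : Phi 0 = 1 / 2 := by
  have := nullSingletonClass_gaussianReal (μ := 0) one_ne_zero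
  have : (gaussianReal 0 1).IsNegInvariant := ⟨gaussianReal_map_neg.trans (by rw [neg_zero])⟩
  have symm := cdf_neg (gaussianReal 0 1) 0
  rw [neg_zero, ← Phi_eq_cdf] at symm
  linarith

theorem Phi_PhiInv {a : ℝ} (ha : a ∈ Ioo 0 1) : Phi (PhiInv a) = a := by
  have := nullSingletonClass_gaussianReal (μ := 0) one_ne_zero
  refine Function.invFun_eq ?_
  simpa only [Phi_eq_cdf] using exists_cdf_eq (gaussianReal 0 1) ha.1 ha.2

theorem strictMonoOn_PhiInv : StrictMonoOn PhiInv (Ioo 0 1) := by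
  intro a ha b hb hab
  rwa [← strictMono_Phi.lt_iff_lt, Phi_PhiInv ha, Phi_PhiInv hb]

theorem PhiInv_half : PhiInv (1 / 2) = 0 :=
  strictMono_Phi.injective <| by rw [Phi_PhiInv (by norm_num), Phi_zero]

end StandardNormal

section Quantile

variable {X : Type*} [MeasurableSpace X] {ν : Measure X} [IsProbabilityMeasure ν] {F : X → ℝ}

theorem ofReal_le_measure_setOf_le_iff (hF : AEMeasurable F ν) (a r : ℝ) :
    ENNReal.ofReal a ≤ ν {x | F x ≤ r} ↔ a ≤ cdf (ν.map F) r := by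
  have := Measure.isProbabilityMeasure_map hF
  rw [← ENNReal.ofReal_le_ofReal_iff (cdf_nonneg _ r), ofReal_cdf,
    Measure.map_apply_of_aemeasurable hF measurableSet_Iic]
  rfl

theorem isGLB_quantile (hF : AEMeasurable F ν) {a : ℝ} (h0 : 0 < a) (h1 : a < 1) :
    IsGLB {r : ℝ | ENNReal.ofReal a ≤ ν {x | F x ≤ r}} (quantile ν F a) := by
  rw [quantile]
  simp only [ofReal_le_measure_setOf_le_iff hF]
  obtain ⟨y, hy⟩ := ((tendsto_cdf_atTop (ν.map F)).eventually_const_le h1).exists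
  obtain ⟨x, hx⟩ := ((tendsto_cdf_atBot (ν.map F)).eventually_lt_const h0).exists
  exact Real.isGLB_sInf ⟨y, hy⟩
    ⟨x, fun r hr => ((monotone_cdf (ν.map F)).reflect_lt (hx.trans_le hr)).le⟩

end Quantile

theorem thickening_setOf_le_subset_setOf_lt {X : Type*} [PseudoMetricSpace X] {K : ℝ≥0} {F : X → ℝ}
    (hF : LipschitzWith K F) (hK : K ≠ 0) (c r : ℝ) :
    Metric.thickening r {x | F x ≤ c} ⊆ {x | F x < c + K * r} := by
  intro y hy
  obtain ⟨z, hz : F z ≤ c, hyz⟩ := Metric.mem_thickening_iff.1 hy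
  have increment : F y - F z < K * r := (le_abs_self _).trans_lt (hF.dist_lt_mul_of_lt hK hyz)
  change F y < c + K * r
  linarith

namespace GaussianEnlargement

variable {X : Type*} [MetricSpace X] [MeasurableSpace X] {ν : Measure X} [IsProbabilityMeasure ν]
  {τ : ℝ}

theorem ofReal_Phi_le_measure_thickening (hν : GaussianEnlargement ν τ) {E : Set X}
    (hE : MeasurableSet E) {a r : ℝ} (ha : 0 < a) (haE : ENNReal.ofReal a ≤ ν E) (hr : 0 < r) :
    ENNReal.ofReal (Phi (PhiInv a + r / √(2 * τ))) ≤ ν (Metric.thickening r E) := by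
  rcases (prob_le_one (μ := ν) (s := E)).lt_or_eq with hE1 | hE1
  · have ha_le : a ≤ ν.real E := (ENNReal.ofReal_le_iff_le_toReal (measure_ne_top ν E)).1 haE
    have hE_lt : ν.real E < 1 := ENNReal.toReal_lt_of_lt_ofReal (by rwa [ENNReal.ofReal_one])
    have hPhiInv : PhiInv a ≤ PhiInv (ν.real E) :=
      strictMonoOn_PhiInv.monotoneOn ⟨ha, ha_le.trans_lt hE_lt⟩ ⟨ha.trans_le ha_le, hE_lt⟩ ha_le
    calc ENNReal.ofReal (Phi (PhiInv a + r / √(2 * τ)))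
        ≤ ENNReal.ofReal (Phi (PhiInv (ν.real E) + r / √(2 * τ))) :=
          ENNReal.ofReal_le_ofReal (strictMono_Phi.monotone (by gcongr))
      _ ≤ ν (enlarge E r) := hν E hE ((ENNReal.ofReal_pos.2 ha).trans_le haE) hE1 r hr.le
      _ = ν (Metric.thickening r E) := by rw [enlarge, if_neg hr.ne']
  · calc ENNReal.ofReal (Phi (PhiInv a + r / √(2 * τ)))
        ≤ ν E := hE1 ▸ ENNReal.ofReal_le_one.2 (Phi_le_one _)
      _ ≤ ν (Metric.thickening r E) := measure_mono (Metric.self_subset_thickening hr E)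

variable [OpensMeasurableSpace X] {K : ℝ≥0} {F : X → ℝ}

theorem ofReal_Phi_le_measure_lt_add (hν : GaussianEnlargement ν τ) (hF : LipschitzWith K F)
    (hK : K ≠ 0) {a c r : ℝ} (ha : 0 < a) (hc : ENNReal.ofReal a ≤ ν {x | F x ≤ c}) (hr : 0 < r) :
    ENNReal.ofReal (Phi (PhiInv a + r / (K * √(2 * τ)))) ≤ ν {x | F x < c + r} := by
  have hsub := thickening_setOf_le_subset_setOf_lt hF hK c (r / K)
  rw [mul_div_cancel₀ r (NNReal.coe_ne_zero.2 hK)] at hsub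
  rw [← div_div]
  exact (hν.ofReal_Phi_le_measure_thickening
    (measurableSet_le hF.continuous.measurable measurable_const) ha hc
    (by positivity)).trans (measure_mono hsub)

theorem quantile_sub_quantile_le (hν : GaussianEnlargement ν τ) (hτ : 0 < τ)
    (hF : LipschitzWith K F) (hK : K ≠ 0) {a b : ℝ} (ha : 0 < a) (hab : a < b) (hb : b < 1) :
    quantile ν F b - quantile ν F a ≤ K * √(2 * τ) * (PhiInv b - PhiInv a) := by
  have hFm : AEMeasurable F ν := hF.continuous.aemeasurable
  have hscale : 0 < K * √(2 * τ) := by positivity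
  have ha' : a ∈ Ioo 0 1 := ⟨ha, hab.trans hb⟩
  have hb' : b ∈ Ioo 0 1 := ⟨ha.trans hab, hb⟩
  have hr : 0 < K * √(2 * τ) * (PhiInv b - PhiInv a) :=
    mul_pos hscale (sub_pos.2 (strictMonoOn_PhiInv ha' hb' hab))
  rw [sub_le_comm, le_isGLB_iff (isGLB_quantile hFm ha'.1 ha'.2)]
  intro c hc
  refine sub_le_iff_le_add.2 ((isGLB_quantile hFm hb'.1 hb'.2).1 ?_)
  calc ENNReal.ofReal b
      = ENNReal.ofReal (Phi (PhiInv a +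
          K * √(2 * τ) * (PhiInv b - PhiInv a) / (K * √(2 * τ)))) := by
        rw [mul_div_cancel_left₀ _ hscale.ne', add_sub_cancel, Phi_PhiInv hb']
    _ ≤ ν {x | F x < c + K * √(2 * τ) * (PhiInv b - PhiInv a)} :=
        hν.ofReal_Phi_le_measure_lt_add hF hK ha hc hr
    _ ≤ ν {x | F x ≤ c + K * √(2 * τ) * (PhiInv b - PhiInv a)} :=
        measure_mono fun x (hx : F x < _) => hx.le

theorem measureReal_add_le_le_one_sub_Phi (hν : GaussianEnlargement ν τ)
    (hF : LipschitzWith K F) (hK : K ≠ 0) {a c r : ℝ} (ha : 0 < a)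
    (hc : ENNReal.ofReal a ≤ ν {x | F x ≤ c}) (hr : 0 < r) :
    ν.real {x | c + r ≤ F x} ≤ 1 - Phi (PhiInv a + r / (K * √(2 * τ))) := by
  have hcompl : {x | c + r ≤ F x} = {x | F x < c + r}ᶜ := by
    ext x
    simp
  rw [hcompl, probReal_compl_eq_one_sub
    (measurableSet_lt hF.continuous.measurable measurable_const)]
  gcongr
  exact (ENNReal.ofReal_le_iff_le_toReal (measure_ne_top ν _)).1
    (hν.ofReal_Phi_le_measure_lt_add hF hK ha hc hr)

theorem measureReal_le_sub_le_one_sub_Phi (hν : GaussianEnlargement ν τ)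
    (hF : LipschitzWith K F) (hK : K ≠ 0) {a c r : ℝ} (ha : 0 < a)
    (hc : ENNReal.ofReal a ≤ ν {x | c ≤ F x}) (hr : 0 < r) :
    ν.real {x | F x ≤ c - r} ≤ 1 - Phi (PhiInv a + r / (K * √(2 * τ))) := by
  have hneg : {x | F x ≤ c - r} = {x | -c + r ≤ -F x} := by
    ext x
    rw [mem_ofPred_eq, mem_ofPred_eq, le_neg, neg_add', neg_neg]
  rw [hneg]
  exact hν.measureReal_add_le_le_one_sub_Phi hF.neg hK ha
    (by simpa only [Pi.neg_apply, neg_le_neg_iff]) hr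

end GaussianEnlargement

/-- Lipschitz quantile estimates: if `ν` satisfies the Gaussian enlargement property with
parameter `τ` and `F` is `L`-Lipschitz, then `q_b(F) - q_a(F) ≤ L√(2τ)(Φ⁻¹(b) - Φ⁻¹(a))`
for `0 < a < b < 1`; and if `m` is a median of `F`, then for every `r > 0`,
`ν(F ≥ m+r) ≤ 1 - Φ(r/(L√(2τ)))` and `ν(F ≤ m-r) ≤ 1 - Φ(r/(L√(2τ)))`. -/
theorem stmt13 {X : Type*} [MetricSpace X] [MeasurableSpace X] [BorelSpace X]
    (ν : Measure X) [IsProbabilityMeasure ν] (τ : ℝ) (hτ : 0 < τ)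
    (hGEP : GaussianEnlargement ν τ)
    (L : ℝ) (hL : 0 < L) (F : X → ℝ) (hF : LipschitzWith (Real.toNNReal L) F) :
    (∀ a b : ℝ, 0 < a → a < b → b < 1 →
      quantile ν F b - quantile ν F a ≤
        L * Real.sqrt (2 * τ) * (PhiInv b - PhiInv a)) ∧
    (∀ m : ℝ, ENNReal.ofReal (1 / 2) ≤ ν {x | F x ≤ m} →
      ENNReal.ofReal (1 / 2) ≤ ν {x | m ≤ F x} →
      ∀ r > (0 : ℝ),
        (ν {x | m + r ≤ F x}).toReal ≤ 1 - Phi (r / (L * Real.sqrt (2 * τ))) ∧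
        (ν {x | F x ≤ m - r}).toReal ≤ 1 - Phi (r / (L * Real.sqrt (2 * τ)))) := by
  lift L to ℝ≥0 using hL.le
  rw [Real.toNNReal_coe] at hF
  have hL' : L ≠ 0 := (NNReal.coe_pos.1 hL).ne'
  refine ⟨fun a b ha hab hb => hGEP.quantile_sub_quantile_le hτ hF hL' ha hab hb,
    fun m hle hge r hr => ⟨?upperTail, ?lowerTail⟩⟩
  case upperTail =>
    simpa only [PhiInv_half, zero_add] using!
      hGEP.measureReal_add_le_le_one_sub_Phi hF hL' one_half_pos hle hr
  case lowerTail =>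
    simpa only [PhiInv_half, zero_add] using!
      hGEP.measureReal_le_sub_le_one_sub_Phi hF hL' one_half_pos hge hr
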